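/- arXiv:2311.00158 — 3 statements merged into one kernel-verified Lean document; each statement's English description precedes it below -/
import Mathlib

section
/- Let G be a group acting on a set X and let L ⊆ X be a subset such that for every g ∈ G the symmetric difference of g • L and L is finite. Then the map φ : G → ℤ defined by φ(g) = |(g • L) \ L| − |L \ (g • L)| (where |·| denotes the cardinality of these finite sets, viewed as an integer) is a group homomorphism. -/
open Pointwise

/-- The relative cardinality is additive. -/
theorem netFlow_aux {X : Type*} (A B C : Set X)
    (h1 : (A \ B).Finite) (h2 : (B \ A).Finite) (h3 : (B \ C).Finite)
    (h4 : (C \ B).Finite) (h5 : (A \ C).Finite) (h6 : (C \ A).Finite) :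
    ((A \ C).ncard : ℤ) - (C \ A).ncard =
      ((A \ B).ncard - (B \ A).ncard) + ((B \ C).ncard - (C \ B).ncard) := by
  have e1 := Set.ncard_inter_add_ncard_diff_eq_ncard (A \ B) C h1
  have e2 := Set.ncard_inter_add_ncard_diff_eq_ncard (B \ A) C h2
  have e3 := Set.ncard_inter_add_ncard_diff_eq_ncard (B \ C) A h3
  have e4 := Set.ncard_inter_add_ncard_diff_eq_ncard (C \ B) A h4
  have e5 := Set.ncard_inter_add_ncard_diff_eq_ncard (A \ C) B h5
  have e6 := Set.ncard_inter_add_ncard_diff_eq_ncard (C \ A) B h6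
  have f1 : (A \ B) ∩ C = (C \ B) ∩ A := by ext; simp; tauto
  have f2 : (B \ A) ∩ C = (C \ A) ∩ B := by ext; simp; tauto
  have f3 : (B \ C) ∩ A = (A \ C) ∩ B := by ext; simp; tauto
  have f4 : (A \ B) \ C = (A \ C) \ B := by ext; simp; tauto
  have f5 : (B \ A) \ C = (B \ C) \ A := by ext; simp; tauto
  have f6 : (C \ A) \ B = (C \ B) \ A := by ext; simp; tauto
  rw [f1, f4] at e1
  rw [f2, f5] at e2
  rw [f3] at e3
  rw [f6] at e6
  omega

/-- Let a group `G` act on a set `X` and let `L ⊆ X` be such that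
`g • L` and `L` have finite symmetric difference for every `g ∈ G`.  Then the
net-flow map `φ : G → ℤ`, `φ g = |(g • L) \ L| - |L \ (g • L)|`, is a group
homomorphism. -/
theorem netFlow_is_homomorphism
    {G X : Type*} [Group G] [MulAction G X] (L : Set X)
    (hfin : ∀ g : G, ((g • L) \ L).Finite ∧ (L \ (g • L)).Finite)
    (φ : G → ℤ)
    (hφ : ∀ g : G, φ g = (((g • L) \ L).ncard : ℤ) - ((L \ (g • L)).ncard : ℤ)) :
    ∀ g₁ g₂ : G, φ (g₁ * g₂) = φ g₁ + φ g₂ := by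
  intro g₁ g₂
  have k1 : (g₁ * g₂) • L \ g₁ • L = g₁ • (g₂ • L \ L) := by
    rw [Set.smul_set_sdiff, mul_smul]
  have k2 : g₁ • L \ (g₁ * g₂) • L = g₁ • (L \ g₂ • L) := by
    rw [Set.smul_set_sdiff, mul_smul]
  have h := netFlow_aux ((g₁ * g₂) • L) (g₁ • L) L
    (k1 ▸ (hfin g₂).1.smul_set) (k2 ▸ (hfin g₂).2.smul_set)
    (hfin g₁).1 (hfin g₁).2 (hfin (g₁ * g₂)).1 (hfin (g₁ * g₂)).2
  rw [k1, k2, Set.ncard_smul_set, Set.ncard_smul_set] at h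
  rw [hφ, hφ, hφ, h, add_comm]
end

section
/- Let α ≥ 1 be an ordinal and let d ≥ 1 be a natural number. The ordinal space ω^α·d + 1, i.e., the set {β : β ≤ ω^α·d} of ordinals equipped with the order topology, is self-similar if and only if d = 1. -/
open Ordinal

/-- A topological space `E` is *self-similar* if for every partition of `E` into
finitely many pairwise disjoint clopen subsets, one of the pieces contains an open
subset homeomorphic to `E`. -/
def IsSelfSimilarSpace (E : Type*) [TopologicalSpace E] : Prop :=
  ∀ (n : ℕ) (P : Fin n → Set E),
    (∀ i, IsClopen (P i)) →
    (Pairwise fun i j => Disjoint (P i) (P j)) →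
    (⋃ i, P i) = Set.univ →
    ∃ (i : Fin n) (X : Set E), IsOpen X ∧ X ⊆ P i ∧ Nonempty (X ≃ₜ E)
open Filter Topology Order in
/-- Points of Cantor–Bendixson rank at least `γ`. -/
def cbSet (E : Type*) [TopologicalSpace E] (γ : Ordinal) : Set E :=
  {x | ∀ δ, ∀ _ : δ < γ, AccPt x (Filter.principal (cbSet E δ))}
termination_by γ

theorem mem_cbSet {E : Type*} [TopologicalSpace E] {γ : Ordinal} {x : E} :
    x ∈ cbSet E γ ↔ ∀ δ < γ, AccPt x (Filter.principal (cbSet E δ)) := by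
  rw [cbSet]; rfl

open Filter Topology in
theorem accPt_openEmbedding {X Y : Type*} [TopologicalSpace X] [TopologicalSpace Y]
    {f : X → Y} (hf : IsOpenEmbedding f) (S : Set X) (T : Set Y)
    (h : ∀ x, x ∈ S ↔ f x ∈ T) (x : X) :
    AccPt x (𝓟 S) ↔ AccPt (f x) (𝓟 T) := by
  rw [accPt_iff_frequently, accPt_iff_frequently, ← hf.map_nhds_eq, frequently_map]
  simp only [h, hf.injective.ne_iff]

theorem cbSet_openEmbedding {X Y : Type*} [TopologicalSpace X] [TopologicalSpace Y]
    {f : X → Y} (hf : Topology.IsOpenEmbedding f) (γ : Ordinal) :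
    ∀ x, x ∈ cbSet X γ ↔ f x ∈ cbSet Y γ := by
  induction γ using WellFoundedLT.induction with
  | ind γ ih =>
    intro x
    rw [mem_cbSet, mem_cbSet]
    exact forall₂_congr fun δ hδ => accPt_openEmbedding hf _ _ (ih δ hδ) x

/-- Explicit description of the derived sets of the ordinals. -/
def ordSet (γ : Ordinal) : Set Ordinal := {x | γ = 0 ∨ (x ≠ 0 ∧ omega0 ^ γ ∣ x)}

theorem opow_pos' (γ : Ordinal) : omega0 ^ γ ≠ 0 :=
  (Ordinal.opow_pos γ omega0_pos).ne'

theorem dvd_of_accPt {δ x : Ordinal} (h : AccPt x (Filter.principal (ordSet δ))) :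
    omega0 ^ Order.succ δ ∣ x := by
  have hx := h.isSuccLimit
  obtain ⟨-, h⟩ := SuccOrder.accPt_principal.1 h
  have key : ∀ z, omega0 ^ δ * z < x → omega0 ^ δ * Order.succ z < x := by
    intro z hz
    obtain ⟨y, hy, hy1, hy2⟩ := h _ hz
    have hd : omega0 ^ δ ∣ y := by
      rcases hy with rfl | hy
      · simp
      · exact hy.2
    obtain ⟨w, rfl⟩ := hd
    refine lt_of_le_of_lt ?_ hy2
    gcongr
    exact Order.succ_le_of_lt (lt_of_mul_lt_mul_left' hy1)
  have hdvd : omega0 ^ δ * (x / omega0 ^ δ) = x := by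
    refine le_antisymm (Ordinal.mul_div_le _ _) ?_
    by_contra! hlt
    exact absurd (key _ hlt) (Ordinal.lt_mul_succ_div x (opow_pos' δ)).not_gt
  set q := x / omega0 ^ δ with hq
  rw [← hdvd, Ordinal.opow_succ]
  apply mul_dvd_mul_left
  rw [← Ordinal.isSuccPrelimit_iff_omega0_dvd]
  rw [Order.isSuccPrelimit_iff_succ_lt]
  intro z hz
  have := key z (by rw [← hdvd]; exact (mul_lt_mul_iff_right₀ (Ordinal.opow_pos δ omega0_pos)).2 hz)
  rw [← hdvd] at this
  exact lt_of_mul_lt_mul_left' this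

theorem accPt_of_mem {δ γ x : Ordinal} (hδ : δ < γ) (h : x ∈ ordSet γ) :
    AccPt x (Filter.principal (ordSet δ)) := by
  rcases h with rfl | ⟨hx, hd⟩
  · exact absurd hδ not_lt_zero
  rw [SuccOrder.accPt_principal]
  refine ⟨by simpa using hx, fun a ha => ?_⟩
  have hd' : omega0 ^ Order.succ δ ∣ x :=
    (Ordinal.opow_dvd_opow _ (Order.succ_le_of_lt hδ)).trans hd
  obtain ⟨z, rfl⟩ := hd'
  rw [Ordinal.opow_succ, mul_assoc] at ha ⊢
  have hz : Order.IsSuccPrelimit (omega0 * z) :=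
    Ordinal.isSuccPrelimit_iff_omega0_dvd.2 (dvd_mul_right _ _)
  refine ⟨omega0 ^ δ * Order.succ (a / omega0 ^ δ), Or.inr ⟨?_, dvd_mul_right _ _⟩,
    Ordinal.lt_mul_succ_div a (opow_pos' δ), ?_⟩
  · exact mul_ne_zero (opow_pos' δ) (Order.succ_ne_bot _)
  · exact (mul_lt_mul_iff_right₀ (Ordinal.opow_pos δ omega0_pos)).2
      (hz.succ_lt ((Ordinal.div_lt (opow_pos' δ)).2 ha))

theorem cbSet_ordinal (γ : Ordinal) : cbSet Ordinal γ = ordSet γ := by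
  induction γ using WellFoundedLT.induction with
  | ind γ ih =>
    ext x
    rw [mem_cbSet]
    constructor
    · intro h
      have h' : ∀ δ < γ, AccPt x (Filter.principal (ordSet δ)) := fun δ hδ => by
        rw [← ih δ hδ]; exact h δ hδ
      rcases eq_or_ne γ 0 with h0 | h0
      · exact Or.inl h0
      refine Or.inr ⟨?_, ?_⟩
      · simpa using (h' 0 (pos_iff_ne_zero.2 h0)).not_isMin
      · rcases Ordinal.zero_or_succ_or_isSuccLimit γ with hz | ⟨δ, rfl⟩ | hl
        · exact absurd hz h0
        · exact dvd_of_accPt (h' δ (Order.lt_succ δ))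
        · rw [Ordinal.dvd_iff_mod_eq_zero]
          obtain ⟨δ, hδ, hlt⟩ := (Ordinal.lt_opow_of_isSuccLimit omega0_ne_zero hl).1
            (Ordinal.mod_lt x (opow_pos' γ))
          have h1 : omega0 ^ δ ∣ x :=
            (Ordinal.opow_dvd_opow _ (Order.le_succ δ)).trans (dvd_of_accPt (h' δ hδ))
          rw [← Ordinal.div_add_mod x (omega0 ^ γ), Ordinal.dvd_add_iff
            ((Ordinal.opow_dvd_opow _ hδ.le).trans (dvd_mul_right _ _))] at h1
          by_contra hne
          exact absurd (Ordinal.le_of_dvd hne h1) hlt.not_ge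
    · intro h δ hδ
      rw [ih δ hδ]
      exact accPt_of_mem hδ h

theorem isOpen_Iic_ordinal (M : Ordinal) : IsOpen (Set.Iic M) := by
  rw [← Order.Iio_succ]; exact isOpen_Iio

theorem mem_cbSet_Iic {M : Ordinal} (γ : Ordinal) (hγ : 1 ≤ γ) (x : Set.Iic M) :
    x ∈ cbSet (Set.Iic M) γ ↔ (x : Ordinal) ≠ 0 ∧ omega0 ^ γ ∣ (x : Ordinal) := by
  rw [cbSet_openEmbedding (isOpen_Iic_ordinal M).isOpenEmbedding_subtypeVal, cbSet_ordinal]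
  have : γ ≠ 0 := (zero_lt_one.trans_le hγ).ne'
  simp [ordSet, this]

theorem cbSet_finite (α : Ordinal) (hα : 1 ≤ α) (d : ℕ) :
    (cbSet (Set.Iic (omega0 ^ α * d)) α).Finite := by
  refine Set.Finite.of_finite_image (f := Subtype.val) ?_ Subtype.val_injective.injOn
  refine ((Set.finite_Iic d).image (fun n : ℕ => omega0 ^ α * (n : Ordinal))).subset ?_
  rintro _ ⟨x, hx, rfl⟩
  obtain ⟨-, k, hk⟩ := (mem_cbSet_Iic α hα x).1 hx
  have hle : omega0 ^ α * k ≤ omega0 ^ α * d := hk ▸ x.2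
  have hkd : k ≤ d := by
    by_contra! hlt
    exact absurd ((mul_lt_mul_iff_right₀ (Ordinal.opow_pos α omega0_pos)).2 hlt) hle.not_gt
  obtain ⟨n, rfl⟩ := Ordinal.lt_omega0.1 (hkd.trans_lt (Ordinal.natCast_lt_omega0 d))
  exact ⟨n, by simpa using hkd, hk.symm⟩

theorem not_selfSimilar (α : Ordinal) (hα : 1 ≤ α) (d : ℕ) (hd : 1 < d) :
    ¬ IsSelfSimilarSpace (Set.Iic (omega0 ^ α * d)) := by
  intro H
  have hpos := Ordinal.opow_pos α omega0_pos
  have hlt : omega0 ^ α < omega0 ^ α * d := by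
    conv_lhs => rw [← mul_one (omega0 ^ α)]
    exact (mul_lt_mul_iff_right₀ hpos).2 (by exact_mod_cast hd)
  let E := Set.Iic (omega0 ^ α * (d : Ordinal))
  let A : Set E := {x | (x : Ordinal) ≤ omega0 ^ α}
  have hA : IsClopen A :=
    ⟨isClosed_Iic.preimage continuous_subtype_val,
      (isOpen_Iic_ordinal _).preimage continuous_subtype_val⟩
  obtain ⟨i, X, hX, hXP, ⟨h⟩⟩ := H 2 ![A, Aᶜ]
    (by intro i; fin_cases i
        · exact hA
        · exact hA.compl)
    (by intro i j hij
        fin_cases i <;> fin_cases j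
        · exact absurd rfl hij
        · exact disjoint_compl_right
        · exact disjoint_compl_left
        · exact absurd rfl hij)
    (by ext x
        simp only [Set.mem_iUnion, Set.mem_univ, iff_true]
        by_cases hx : x ∈ A
        · exact ⟨0, hx⟩
        · exact ⟨1, hx⟩)
  let g : E → E := fun x => (h.symm x : E)
  have hg : Topology.IsOpenEmbedding g :=
    hX.isOpenEmbedding_subtypeVal.comp h.symm.isOpenEmbedding
  have hmaps : Set.MapsTo g (cbSet E α) (cbSet E α) := fun x hx =>
    (cbSet_openEmbedding hg α x).1 hx
  have hsurj : Set.SurjOn g (cbSet E α) (cbSet E α) :=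
    (((cbSet_finite α hα d).injOn_iff_bijOn_of_mapsTo hmaps).1 hg.injective.injOn).surjOn
  have hall : ∀ x ∈ cbSet E α, x ∈ (![A, Aᶜ] : Fin 2 → Set E) i := by
    intro x hx
    obtain ⟨y, -, rfl⟩ := hsurj hx
    exact hXP (h.symm y).2
  have h1 := hall ⟨omega0 ^ α, hlt.le⟩ ((mem_cbSet_Iic α hα _).2 ⟨hpos.ne', dvd_rfl⟩)
  have h2 := hall ⟨omega0 ^ α * d, Set.mem_Iic.2 le_rfl⟩
    ((mem_cbSet_Iic α hα _).2 ⟨(hpos.trans hlt).ne', dvd_mul_right _ _⟩)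
  fin_cases i
  · exact absurd hlt (not_lt_of_ge h2)
  · exact h1 (show omega0 ^ α ≤ omega0 ^ α from le_rfl)

theorem selfSimilar_opow (α : Ordinal) (hα : 1 ≤ α) :
    IsSelfSimilarSpace (Set.Iic (omega0 ^ α)) := by
  intro n P hP _ hU
  have hM0 := opow_pos' α
  have hlim : Order.IsSuccLimit (omega0 ^ α) :=
    Ordinal.isSuccLimit_opow_left Ordinal.isSuccLimit_omega0 (zero_lt_one.trans_le hα).ne'
  let top : Set.Iic (omega0 ^ α) := ⟨omega0 ^ α, Set.mem_Iic.2 le_rfl⟩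
  obtain ⟨i, hi⟩ := Set.mem_iUnion.1 (hU ▸ Set.mem_univ top)
  have hopen := (isOpen_Iic_ordinal (omega0 ^ α)).isOpenMap_subtype_val _ (hP i).isOpen
  obtain ⟨a, ha, hsub⟩ := SuccOrder.isOpen_iff.1 hopen (omega0 ^ α) ⟨top, hi, rfl⟩ hlim
  have hc : Order.succ a < omega0 ^ α := hlim.succ_lt ha
  refine ⟨i, {x | a < (x : Ordinal)}, isOpen_Ioi.preimage continuous_subtype_val, ?_, ?_⟩
  · intro x hx
    rcases (show (x : Ordinal) ≤ omega0 ^ α from x.2).lt_or_eq with hlt | heq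
    · obtain ⟨y, hy, hyx⟩ := hsub ⟨hx, hlt⟩
      exact Subtype.ext hyx ▸ hy
    · exact (show x = top from Subtype.ext heq) ▸ hi
  · have hadd := Ordinal.add_omega0_opow hc
    have hlt : ∀ b, a < Order.succ a + b := fun b => (Order.lt_succ a).trans_le le_self_add
    let f : Set.Iic (omega0 ^ α) → {x : Set.Iic (omega0 ^ α) | a < (x : Ordinal)} :=
      fun x => ⟨⟨Order.succ a + x, by
        exact (add_le_add le_rfl (Set.mem_Iic.1 x.2)).trans hadd.le⟩, hlt x⟩
    have hf : Continuous f := by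
      refine Continuous.subtype_mk (Continuous.subtype_mk ?_ _) _
      exact (Ordinal.isNormal_add_right (Order.succ a)).continuous.comp continuous_subtype_val
    have hbij : Function.Bijective f := by
      constructor
      · intro x y hxy
        have : Order.succ a + (x : Ordinal) = Order.succ a + (y : Ordinal) :=
          congrArg (fun z : {x : Set.Iic (omega0 ^ α) | a < (x : Ordinal)} =>
            ((z : Set.Iic (omega0 ^ α)) : Ordinal)) hxy
        exact Subtype.ext (add_left_cancel this)
      · rintro ⟨⟨x, hx⟩, hax⟩
        have hle : Order.succ a ≤ x := Order.succ_le_of_lt hax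
        refine ⟨⟨x - Order.succ a, (Ordinal.sub_le_self _ _).trans hx⟩, ?_⟩
        exact Subtype.ext (Subtype.ext (Ordinal.add_sub_cancel_of_le hle))
    have : CompactSpace (Set.Iic (omega0 ^ α)) := by
      rw [← isCompact_iff_compactSpace, ← Set.Icc_bot]
      exact isCompact_Icc
    exact ⟨(Continuous.homeoOfEquivCompactToT2 (f := Equiv.ofBijective f hbij) hf).symm⟩

/-- For an ordinal `α ≥ 1` and a natural number `d ≥ 1`, the ordinal
space `ω ^ α * d + 1` (i.e. the set of ordinals `β ≤ ω ^ α * d` with the order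
topology) is self-similar if and only if `d = 1`. -/
theorem selfSimilar_ordinal_space_iff
    (α : Ordinal) (hα : 1 ≤ α) (d : ℕ) (hd : 1 ≤ d) :
    IsSelfSimilarSpace (Set.Iic (omega0 ^ α * d)) ↔ d = 1 := by
  constructor
  · intro H
    by_contra hne
    exact not_selfSimilar α hα d (by omega) H
  · rintro rfl
    rw [Nat.cast_one, mul_one]
    exact selfSimilar_opow α hα
end

section
/- Let α ≥ 1 be an ordinal and let d ≥ 1 be a natural number, and consider the ordinal space E = ω^α·d + 1, i.e., the set {β : β ≤ ω^α·d} of ordinals equipped with the order topology. Then the set of points of E whose orbit under the group of self-homeomorphisms of E is finite has exactly two elements if and only if d = 2. (In general, the points with finite orbit are exactly the d points ω^α·k for k = 1, …, d.) -/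
open Ordinal

namespace DPO

theorem exists_swap {X : Type*} [TopologicalSpace X] {A B : Set X} (hA : IsClopen A)
    (hB : IsClopen B) (hd : Disjoint A B) (h : A ≃ₜ B) :
    ∃ e : X ≃ₜ X, ∀ a : A, e a = h a := by
  classical
  let f : X → X := fun x => if hx : x ∈ A then h ⟨x, hx⟩ else
    if hx : x ∈ B then h.symm ⟨x, hx⟩ else x
  have fA : ∀ x (hx : x ∈ A), f x = h ⟨x, hx⟩ := fun x hx => by simp [f, hx]
  have fB : ∀ x (hx : x ∈ B), f x = h.symm ⟨x, hx⟩ := fun x hx => by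
    have : x ∉ A := fun h' => Set.disjoint_left.1 hd h' hx
    simp [f, hx, this]
  have fC : ∀ x, x ∉ A → x ∉ B → f x = x := fun x h1 h2 => by simp [f, h1, h2]
  have hinv : ∀ x, f (f x) = x := by
    intro x
    by_cases h1 : x ∈ A
    · rw [fA x h1, fB _ (h ⟨x, h1⟩).2]; simp
    · by_cases h2 : x ∈ B
      · rw [fB x h2, fA _ (h.symm ⟨x, h2⟩).2]; simp
      · rw [fC x h1 h2, fC x h1 h2]
  have cA : ContinuousOn f A := by
    rw [continuousOn_iff_continuous_domRestrict]
    have : A.domRestrict f = fun a : A => (h a : X) := by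
      ext a; exact fA a a.2
    rw [this]; fun_prop
  have cB : ContinuousOn f B := by
    rw [continuousOn_iff_continuous_domRestrict]
    have : B.domRestrict f = fun a : B => (h.symm a : X) := by
      ext a; exact fB a a.2
    rw [this]; fun_prop
  have cC : ContinuousOn f (Aᶜ ∩ Bᶜ) := by
    refine continuousOn_id.congr ?_
    intro x hx
    exact fC x hx.1 hx.2
  have hf : Continuous f := by
    rw [continuous_iff_continuousAt]
    intro x
    by_cases h1 : x ∈ A
    · exact cA.continuousAt (hA.isOpen.mem_nhds h1)
    · by_cases h2 : x ∈ B
      · exact cB.continuousAt (hB.isOpen.mem_nhds h2)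
      · exact cC.continuousAt
          ((hA.compl.isOpen.inter hB.compl.isOpen).mem_nhds ⟨h1, h2⟩)
  exact ⟨⟨⟨f, f, hinv, hinv⟩, hf, hf⟩, fun a => fA a a.2⟩

theorem isOpen_Iic (b : Ordinal) : IsOpen (Set.Iic b) := by
  have : Set.Iic b = Set.Iio (Order.succ b) := by ext; simp
  rw [this]; exact isOpen_Iio

/-- interval `(a, b]` inside `Iic t`. -/
def J (t a b : Ordinal) : Set (Set.Iic t) := {x | a < x.1 ∧ x.1 ≤ b}

theorem J_clopen (t a b : Ordinal) : IsClopen (J t a b) := by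
  have : J t a b = Subtype.val ⁻¹' (Set.Ioi a ∩ Set.Iic b) := rfl
  rw [this]
  refine IsClopen.preimage ⟨?_, isOpen_Ioi.inter (isOpen_Iic b)⟩ continuous_subtype_val
  refine IsClosed.inter ?_ isClosed_Iic
  have := (isOpen_Iic a).isClosed_compl
  simpa using this

instance (t a b : Ordinal) : (J t a b).OrdConnected :=
  ⟨fun _ hx _ hy _ hz => ⟨hx.1.trans_le hz.1, le_trans (show _ ≤ _ from hz.2) hy.2⟩⟩

/-- order isomorphism between two intervals of the same length. -/
noncomputable def Jiso (t a b c : Ordinal) (ha : a + c ≤ t) (hb : b + c ≤ t) :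
    J t a (a + c) ≃o J t b (b + c) where
  toFun x := ⟨⟨b + (x.1.1 - a), le_trans (by
      gcongr; exact Ordinal.sub_le.2 x.2.2) hb⟩, by
      refine ⟨?_, ?_⟩
      · have := Ordinal.sub_ne_zero_iff_lt.2 x.2.1
        exact lt_add_of_pos_right _ (pos_iff_ne_zero.2 this)
      · show b + _ ≤ b + c
        gcongr; exact Ordinal.sub_le.2 x.2.2⟩
  invFun x := ⟨⟨a + (x.1.1 - b), le_trans (by
      gcongr; exact Ordinal.sub_le.2 x.2.2) ha⟩, by
      refine ⟨?_, ?_⟩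
      · have := Ordinal.sub_ne_zero_iff_lt.2 x.2.1
        exact lt_add_of_pos_right _ (pos_iff_ne_zero.2 this)
      · show a + _ ≤ a + c
        gcongr; exact Ordinal.sub_le.2 x.2.2⟩
  left_inv x := by
    ext; simp [Ordinal.add_sub_cancel_of_le x.2.1.le]
  right_inv x := by
    ext; simp [Ordinal.add_sub_cancel_of_le x.2.1.le]
  map_rel_iff' := by
    intro x y
    show b + (x.1.1 - a) ≤ b + (y.1.1 - a) ↔ x.1.1 ≤ y.1.1
    rw [add_le_add_iff_left, Ordinal.sub_le, Ordinal.add_sub_cancel_of_le y.2.1.le]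

theorem exists_homeo (t a b c : Ordinal) (hc : 0 < c) (ha : a + c ≤ t) (hb : b + c ≤ t)
    (hab : a + c ≤ b ∨ b + c ≤ a) :
    ∃ e : Set.Iic t ≃ₜ Set.Iic t, e ⟨a + c, ha⟩ = ⟨b + c, hb⟩ := by
  have hd : Disjoint (J t a (a + c)) (J t b (b + c)) := by
    rw [Set.disjoint_left]
    rintro x ⟨h1, h2⟩ ⟨h3, h4⟩
    rcases hab with h | h
    · exact absurd (h2.trans h) h3.not_ge
    · exact absurd (h4.trans h) h1.not_ge
  obtain ⟨e, he⟩ := exists_swap (J_clopen t a (a + c)) (J_clopen t b (b + c)) hd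
    (Jiso t a b c ha hb).toHomeomorph
  refine ⟨e, ?_⟩
  have := he ⟨⟨a + c, ha⟩, ⟨lt_add_of_pos_right _ hc, le_rfl⟩⟩
  rw [this]
  ext
  simp [Jiso]

theorem exists_homeo_zero (t : Ordinal) (n : ℕ) (ht : ((n + 1 : ℕ) : Ordinal) ≤ t) :
    ∃ e : Set.Iic t ≃ₜ Set.Iic t, e ⟨0, Set.mem_Iic.2 zero_le⟩ = ⟨((n + 1 : ℕ) : Ordinal), ht⟩ := by
  have hA : IsClopen ({⟨0, Set.mem_Iic.2 zero_le⟩} : Set (Set.Iic t)) := by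
    refine ⟨isClosed_singleton, ?_⟩
    have : ({⟨0, Set.mem_Iic.2 zero_le⟩} : Set (Set.Iic t)) = Subtype.val ⁻¹' (Set.Iic 0) := by
      ext x; simp [Subtype.ext_iff]
    rw [this]
    exact (isOpen_Iic 0).preimage continuous_subtype_val
  have hB : IsClopen ({⟨((n + 1 : ℕ) : Ordinal), ht⟩} : Set (Set.Iic t)) := by
    have : ({⟨((n + 1 : ℕ) : Ordinal), ht⟩} : Set (Set.Iic t)) = J t n ((n + 1 : ℕ) : Ordinal) := by
      ext x
      simp only [Set.mem_singleton_iff, Subtype.ext_iff, J, Set.mem_ofPred_eq]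
      push_cast
      rw [← Order.succ_eq_add_one, ← Order.succ_le_iff, le_antisymm_iff, and_comm]
    rw [this]
    exact J_clopen ..
  obtain ⟨e, he⟩ := exists_swap hA hB (by
    simp only [Set.disjoint_singleton, ne_eq, Subtype.ext_iff]
    intro h
    exact absurd h.symm (by exact_mod_cast Nat.succ_ne_zero n)) (Homeomorph.homeomorphOfUnique _ _)
  refine ⟨e, ?_⟩
  have := he ⟨_, rfl⟩
  rw [this]
  exact Set.mem_singleton_iff.1 (Subtype.prop _)

theorem opow_ne (γ : Ordinal) : omega0 ^ γ ≠ 0 := (opow_pos γ omega0_pos).ne'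

theorem F1 {x γ γ' b : Ordinal} (hx : x ≠ 0) (hd : omega0 ^ γ ∣ x) (hg : γ' < γ) (hb : b < x) :
    ∃ z, b < z ∧ z < x ∧ z ≠ 0 ∧ omega0 ^ γ' ∣ z := by
  have h1 : omega0 ^ (Order.succ γ') ∣ x := (opow_dvd_opow _ (Order.succ_le_of_lt hg)).trans hd
  obtain ⟨c, rfl⟩ := h1
  have hc : c ≠ 0 := by rintro rfl; simp at hx
  rw [opow_succ, mul_assoc] at hb ⊢
  have hl : Order.IsSuccLimit (omega0 * c) :=
    isSuccLimit_mul_left isSuccLimit_omega0 (pos_iff_ne_zero.2 hc)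
  obtain ⟨m, hm, hbm⟩ := (lt_mul_iff_of_isSuccLimit hl).1 hb
  exact ⟨_, hbm, mul_lt_mul_of_pos_left hm (opow_pos _ omega0_pos), (zero_le.trans_lt hbm).ne',
    dvd_mul_right _ _⟩

theorem F2 {y γ : Ordinal} (hy : y ≠ 0)
    (h : ∀ b < y, ∃ z, b < z ∧ z < y ∧ omega0 ^ γ ∣ z) : omega0 ^ (Order.succ γ) ∣ y := by
  have key : ∀ s, omega0 ^ γ * s < y → omega0 ^ γ * Order.succ s < y := by
    intro s hs
    obtain ⟨z, h1, h2, ⟨c, rfl⟩⟩ := h _ hs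
    refine lt_of_le_of_lt ?_ h2
    gcongr
    exact Order.succ_le_of_lt (lt_of_mul_lt_mul_left h1 zero_le)
  have hdvd : omega0 ^ γ ∣ y := by
    by_contra hnd
    have hlt : omega0 ^ γ * (y / omega0 ^ γ) < y := by
      refine lt_of_le_of_ne (mul_div_le _ _) fun he => hnd ⟨_, he.symm⟩
    exact absurd (key _ hlt) (lt_mul_succ_div y (opow_ne γ)).not_gt
  obtain ⟨q, rfl⟩ := hdvd
  rw [opow_succ]
  refine mul_dvd_mul_left _ ?_
  rw [← isSuccPrelimit_iff_omega0_dvd, Order.isSuccPrelimit_iff_succ_lt]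
  intro s hs
  exact lt_of_mul_lt_mul_left (key s (mul_lt_mul_of_pos_left hs (opow_pos _ omega0_pos))) zero_le

theorem F3 {y γ : Ordinal} (hγ : Order.IsSuccLimit γ) (h : ∀ γ' < γ, omega0 ^ γ' ∣ y) :
    omega0 ^ γ ∣ y := by
  rw [Ordinal.dvd_iff_mod_eq_zero]
  by_contra hr
  obtain ⟨g, hg, hlt⟩ := (lt_opow_of_isSuccLimit omega0_ne_zero hγ).1 (mod_lt y (opow_ne γ))
  have h1 := h g hg
  rw [← div_add_mod y (omega0 ^ γ)] at h1
  have h2 := (dvd_add_iff ((opow_dvd_opow omega0 hg.le).mul_right _)).1 h1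
  exact absurd (le_of_dvd hr h2) hlt.not_ge

theorem F4 {y γ : Ordinal} (h : ∀ γ' < γ, omega0 ^ (Order.succ γ') ∣ y) :
    omega0 ^ γ ∣ y := by
  rcases zero_or_succ_or_isSuccLimit γ with rfl | ⟨g, rfl⟩ | hl
  · simp
  · exact h g (Order.lt_succ g)
  · exact F3 hl fun g hg => (opow_dvd_opow _ (Order.le_succ g)).trans (h g hg)

theorem exists_rank {x : Ordinal} (hx : x ≠ 0) : ∃ γ δ : Ordinal, x = omega0 ^ γ * Order.succ δ := by
  have hne : ∃ γ : Ordinal, ¬ omega0 ^ γ ∣ x := by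
    refine ⟨Order.succ x, fun h => ?_⟩
    have := le_of_dvd hx h
    exact absurd ((right_le_opow (Order.succ x) one_lt_omega0).trans this) (Order.lt_succ x).not_ge
  obtain ⟨g, hg, hmin⟩ := WellFounded.has_min (wellFounded_lt (α := Ordinal)) {γ : Ordinal | ¬ omega0 ^ γ ∣ x} hne
  have hmin' : ∀ γ' < g, omega0 ^ γ' ∣ x := fun γ' h => by
    by_contra h'
    exact hmin γ' h' h
  rcases zero_or_succ_or_isSuccLimit g with rfl | ⟨γ, rfl⟩ | hl
  · simp at hg
  · obtain ⟨q, rfl⟩ := hmin' γ (Order.lt_succ γ)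
    rcases zero_or_succ_or_isSuccLimit q with rfl | ⟨δ, rfl⟩ | hl
    · simp at hx
    · exact ⟨γ, δ, rfl⟩
    · exfalso
      apply hg
      rw [opow_succ]
      exact mul_dvd_mul_left _ (isSuccPrelimit_iff_omega0_dvd.1 hl.isSuccPrelimit)
  · exact absurd (F3 hl hmin') hg

theorem mem_closure_of {t : Ordinal} {Z : Set (Set.Iic t)} {x : Set.Iic t} (hx : x.1 ≠ 0)
    (h : ∀ b < x.1, ∃ z : Set.Iic t, b < z.1 ∧ z.1 < x.1 ∧ z ∈ Z) : x ∈ closure (Z \ {x}) := by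
  rw [mem_closure_iff_nhds]
  intro s hs
  obtain ⟨l, hl, hs⟩ := exists_Ioc_subset_of_mem_nhds hs
    ⟨⟨0, Set.mem_Iic.2 zero_le⟩, (pos_iff_ne_zero.2 hx : (0 : Ordinal) < x.1)⟩
  obtain ⟨z, h1, h2, h3⟩ := h l.1 hl
  exact ⟨z, hs ⟨h1, h2.le⟩, h3, fun h => h2.ne (congrArg Subtype.val h)⟩

theorem of_mem_closure {t : Ordinal} {Z : Set (Set.Iic t)} {x : Set.Iic t}
    (h : x ∈ closure (Z \ {x})) :
    x.1 ≠ 0 ∧ ∀ b < x.1, ∃ z : Set.Iic t, b < z.1 ∧ z.1 < x.1 ∧ z ∈ Z := by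
  rw [mem_closure_iff] at h
  constructor
  · intro h0
    obtain ⟨z, hz, -, hne⟩ := h (Subtype.val ⁻¹' Set.Iic 0)
      ((isOpen_Iic 0).preimage continuous_subtype_val) (by simp [h0])
    apply hne
    have : z.1 = 0 := by simpa using hz
    exact Subtype.ext (this.trans h0.symm)
  · intro b hb
    obtain ⟨z, hz, hZ, hne⟩ := h (J t b x.1) (J_clopen ..).isOpen ⟨hb, le_rfl⟩
    exact ⟨z, hz.1, lt_of_le_of_ne hz.2 fun h => hne (Subtype.ext h), hZ⟩

theorem image_acc {t : Ordinal} (e : Set.Iic t ≃ₜ Set.Iic t) {Z : Set (Set.Iic t)} {x : Set.Iic t}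
    (h : x ∈ closure (Z \ {x})) : e x ∈ closure (e '' Z \ {e x}) := by
  have h1 : e x ∈ closure (e '' (Z \ {x})) :=
    image_closure_subset_closure_image e.continuous ⟨x, h, rfl⟩
  rwa [Set.image_sdiff e.injective, Set.image_singleton] at h1

theorem acc_of_dvd {t γ γ' : Ordinal} {x : Set.Iic t} (hx : x.1 ≠ 0) (hd : omega0 ^ γ ∣ x.1)
    (hg : γ' < γ) :
    x ∈ closure ({z : Set.Iic t | z.1 ≠ 0 ∧ omega0 ^ γ' ∣ z.1} \ {x}) := by
  refine mem_closure_of hx fun b hb => ?_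
  obtain ⟨z, h1, h2, h3, h4⟩ := F1 hx hd hg hb
  exact ⟨⟨z, h2.le.trans x.2⟩, h1, h2, h3, h4⟩

theorem rank_le {t : Ordinal} (e : Set.Iic t ≃ₜ Set.Iic t) (γ : Ordinal) :
    ∀ x : Set.Iic t, x.1 ≠ 0 → omega0 ^ γ ∣ x.1 → omega0 ^ γ ∣ (e x).1 := by
  induction γ using WellFoundedLT.induction with
  | _ γ ih =>
    intro x hx hd
    refine F4 fun g hg => ?_
    obtain ⟨h0, h1⟩ := of_mem_closure (image_acc e (acc_of_dvd hx hd hg))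
    refine F2 h0 fun b hb => ?_
    obtain ⟨_, hz1, hz2, ⟨w, hw, rfl⟩⟩ := h1 b hb
    exact ⟨_, hz1, hz2, ih g hg w hw.1 hw.2⟩

theorem eq_of_dvd {α x : Ordinal} {d : ℕ} (hx : x ≠ 0) (hle : x ≤ omega0 ^ α * d)
    (hd : omega0 ^ α ∣ x) : ∃ k : ℕ, 1 ≤ k ∧ k ≤ d ∧ x = omega0 ^ α * k := by
  obtain ⟨c, rfl⟩ := hd
  have hc : c ≤ d := le_of_mul_le_mul_left hle (opow_pos _ omega0_pos)
  obtain ⟨k, rfl⟩ := lt_omega0.1 (hc.trans_lt (natCast_lt_omega0 d))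
  refine ⟨k, ?_, by exact_mod_cast hc, rfl⟩
  rcases Nat.eq_zero_or_pos k with rfl | h
  · simp at hx
  · exact h

theorem finite_set (α : Ordinal) (d : ℕ) :
    {x : Set.Iic (omega0 ^ α * d) | ∃ k : ℕ, 1 ≤ k ∧ k ≤ d ∧ (x : Ordinal) = omega0 ^ α * k}.Finite ∧
    {x : Set.Iic (omega0 ^ α * d) |
      ∃ k : ℕ, 1 ≤ k ∧ k ≤ d ∧ (x : Ordinal) = omega0 ^ α * k}.ncard = d := by
  set S := {x : Set.Iic (omega0 ^ α * d) |
    ∃ k : ℕ, 1 ≤ k ∧ k ≤ d ∧ (x : Ordinal) = omega0 ^ α * k} with hS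
  have him : Subtype.val '' S = (fun k : ℕ => omega0 ^ α * (k : Ordinal)) '' (Finset.Icc 1 d : Finset ℕ) := by
    ext y
    constructor
    · rintro ⟨x, ⟨k, h1, h2, h3⟩, rfl⟩
      exact ⟨k, by simp [h1, h2], h3.symm⟩
    · rintro ⟨k, hk, rfl⟩
      simp only [Finset.coe_Icc, Set.mem_Icc] at hk
      refine ⟨⟨omega0 ^ α * k, ?_⟩, ⟨k, hk.1, hk.2, rfl⟩, rfl⟩
      show omega0 ^ α * (k : Ordinal) ≤ omega0 ^ α * d
      gcongr
      exact hk.2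
  have hinj : Function.Injective (fun k : ℕ => omega0 ^ α * (k : Ordinal)) := by
    intro a b h
    have := mul_left_cancel₀ (opow_ne α) h
    exact_mod_cast this
  constructor
  · refine Set.Finite.of_finite_image ?_ Subtype.val_injective.injOn
    rw [him]
    exact (Finset.finite_toSet _).image _
  · rw [← Set.ncard_image_of_injective S Subtype.val_injective, him,
      Set.ncard_image_of_injective _ hinj, Set.ncard_coe_finset]
    simp

theorem infinite_orbit {t : Ordinal} (x : Set.Iic t) (g : ℕ → Ordinal) (hg : Function.Injective g)
    (ht : ∀ n, g n ≤ t) (h : ∀ n, ∃ e : Set.Iic t ≃ₜ Set.Iic t, e x = ⟨g n, ht n⟩) :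
    ¬ {y : Set.Iic t | ∃ e : Set.Iic t ≃ₜ Set.Iic t, e x = y}.Finite := by
  intro hf
  refine Set.infinite_of_injective_forall_mem (f := fun n => (⟨g n, ht n⟩ : Set.Iic t)) ?_ h hf
  intro a b hab
  exact hg (congrArg Subtype.val hab)

theorem main (α : Ordinal) (hα : 1 ≤ α) (d : ℕ) (hd : 1 ≤ d) :
      {x : Set.Iic (omega0 ^ α * d) |
        {y : Set.Iic (omega0 ^ α * d) | ∃ e : Set.Iic (omega0 ^ α * d) ≃ₜ Set.Iic (omega0 ^ α * d),
          e x = y}.Finite} =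
      {x : Set.Iic (omega0 ^ α * d) | ∃ k : ℕ, 1 ≤ k ∧ k ≤ d ∧ (x : Ordinal) = omega0 ^ α * k} := by
  have hαt : omega0 ^ α ≤ omega0 ^ α * d := by
    have : (1 : Ordinal) ≤ d := by exact_mod_cast hd
    calc omega0 ^ α = omega0 ^ α * 1 := (mul_one _).symm
      _ ≤ _ := by gcongr
  have hsmall : ∀ γ < α, ∀ n : ℕ, omega0 ^ γ * (n : Ordinal) + omega0 ^ γ ≤ omega0 ^ α * d := by
    intro γ hγ n
    refine le_trans ?_ hαt
    refine le_trans ?_ (opow_le_opow_right omega0_pos (Order.succ_le_of_lt hγ))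
    rw [← mul_succ, opow_succ]
    gcongr
    exact Order.succ_le_of_lt (natCast_lt_omega0 n)
  ext x
  simp only [Set.mem_ofPred_eq]
  constructor
  · intro hfin
    by_contra hno
    by_cases hx : x.1 = 0
    · have hle : ∀ n : ℕ, ((n + 1 : ℕ) : Ordinal) ≤ omega0 ^ α * d := by
        intro n
        simpa using hsmall 0 (zero_lt_one.trans_le hα) n
      refine infinite_orbit x (fun n => ((n + 1 : ℕ) : Ordinal)) ?_ hle ?_ hfin
      · intro a b h
        simpa using h
      · intro n
        have : x = ⟨0, Set.mem_Iic.2 zero_le⟩ := Subtype.ext hx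
        rw [this]
        exact exists_homeo_zero _ n (hle n)
    · obtain ⟨γ, δ, hγ⟩ := exists_rank hx
      have hlt : γ < α := by
        by_contra hge
        exact hno (eq_of_dvd hx x.2 ((opow_dvd_opow _ (not_lt.1 hge)).trans ⟨_, hγ⟩))
      have hxt : omega0 ^ γ * δ + omega0 ^ γ ≤ omega0 ^ α * d := by
        rw [← mul_succ, ← hγ]; exact x.2
      have hxe : x = ⟨omega0 ^ γ * δ + omega0 ^ γ, hxt⟩ := by
        ext; rw [hγ, mul_succ]
      refine infinite_orbit x (fun n => omega0 ^ γ * (n : Ordinal) + omega0 ^ γ) ?_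
        (hsmall γ hlt) ?_ hfin
      · intro a b h
        simp only [← mul_succ] at h
        have := Order.succ_injective (mul_left_cancel₀ (opow_ne γ) h)
        exact_mod_cast this
      · intro n
        rw [hxe]
        rcases lt_trichotomy δ n with h | h | h
        · refine exists_homeo _ _ _ _ (opow_pos _ omega0_pos) _ _ (Or.inl ?_)
          rw [← mul_succ]
          gcongr
          exact Order.succ_le_of_lt h
        · subst h
          exact ⟨Homeomorph.refl _, rfl⟩
        · refine exists_homeo _ _ _ _ (opow_pos _ omega0_pos) _ _ (Or.inr ?_)
          rw [← mul_succ]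
          gcongr
          exact Order.succ_le_of_lt h
  · rintro ⟨k, hk1, hk2, hk⟩
    refine (finite_set α d).1.subset ?_
    rintro y ⟨e, rfl⟩
    have hx : x.1 ≠ 0 := by
      rw [hk]
      refine mul_ne_zero (opow_ne α) ?_
      exact_mod_cast (by omega : k ≠ 0)
    have hdv : omega0 ^ α ∣ x.1 := ⟨_, hk⟩
    have h0 := (of_mem_closure (image_acc e (acc_of_dvd hx hdv (zero_lt_one.trans_le hα)))).1
    exact eq_of_dvd h0 (e x).2 (rank_le e α x hx hdv)

end DPO

/-- For an ordinal `α ≥ 1` and a natural number `d ≥ 1`, consider the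
ordinal space `E = ω ^ α * d + 1` (the set of ordinals `β ≤ ω ^ α * d` with the order
topology).  The set of points of `E` whose orbit under the group of self-homeomorphisms
of `E` is finite has exactly two elements if and only if `d = 2`; in general, the points
with finite orbit are exactly the `d` points `ω ^ α * k` for `k = 1, …, d`. -/
theorem doubly_pointed_ordinal_space_iff
    (α : Ordinal) (hα : 1 ≤ α) (d : ℕ) (hd : 1 ≤ d) :
    ({x : Set.Iic (omega0 ^ α * d) |
        {y : Set.Iic (omega0 ^ α * d) | ∃ e : Set.Iic (omega0 ^ α * d) ≃ₜ Set.Iic (omega0 ^ α * d),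
          e x = y}.Finite}.ncard = 2 ↔ d = 2) ∧
      {x : Set.Iic (omega0 ^ α * d) |
        {y : Set.Iic (omega0 ^ α * d) | ∃ e : Set.Iic (omega0 ^ α * d) ≃ₜ Set.Iic (omega0 ^ α * d),
          e x = y}.Finite} =
      {x : Set.Iic (omega0 ^ α * d) | ∃ k : ℕ, 1 ≤ k ∧ k ≤ d ∧ (x : Ordinal) = omega0 ^ α * k} := by
  have h := DPO.main α hα d hd
  refine ⟨?_, h⟩
  rw [h, (DPO.finite_set α d).2]
end
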